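/- In the ZF algebra A_R (no spectral parameter), if an element L (valued in A_R ⊗ End(ℂᴺ)) is well-bred, i.e. L₁a₂ = R₂₁a₂L₁ and L₁a₂† = a₂†R₁₂L₁, then L†L is central in A_R, where L† is obtained by applying the adjoint anti-automorphism entrywise. -/

import Mathlib

open scoped BigOperators

noncomputable section

/-- Unitarity `R₁₂ R₂₁ = I` of the R-matrix, in components. -/
def UnitarityC (N : ℕ) (R : Fin N × Fin N → Fin N × Fin N → ℂ) : Prop :=
  ∀ i j k l : Fin N,
    (∑ p : Fin N, ∑ q : Fin N, R (i, j) (p, q) * R (q, p) (l, k)) =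
      if i = k ∧ j = l then 1 else 0

/-- The Yang–Baxter equation `R₁₂ R₁₃ R₂₃ = R₂₃ R₁₃ R₁₂`, in components. -/
def YBEC (N : ℕ) (R : Fin N × Fin N → Fin N × Fin N → ℂ) : Prop :=
  ∀ i j m k l n : Fin N,
    (∑ p : Fin N, ∑ q : Fin N, ∑ t : Fin N,
        R (i, j) (p, q) * R (p, m) (k, t) * R (q, t) (l, n)) =
      ∑ p : Fin N, ∑ q : Fin N, ∑ t : Fin N,
        R (j, m) (q, t) * R (i, t) (p, n) * R (p, q) (k, l)

/-- The Zamolodchikov–Faddeev exchange relations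
`a₁a₂ = R₂₁a₂a₁`, `a₁†a₂† = a₂†a₁†R₂₁`, `a₁a₂† = a₂†R₁₂a₁ + δ₁₂`,
in components, for generators `a i`, `ad i` of a `ℂ`-algebra `A`. -/
def IsZF (N : ℕ) {A : Type*} [Ring A] [Algebra ℂ A]
    (R : Fin N × Fin N → Fin N × Fin N → ℂ) (a ad : Fin N → A) : Prop :=
  (∀ i j : Fin N, a i * a j =
      ∑ k : Fin N, ∑ l : Fin N, R (j, i) (k, l) • (a k * a l)) ∧
  (∀ i j : Fin N, ad i * ad j =
      ∑ k : Fin N, ∑ l : Fin N, R (k, l) (j, i) • (ad k * ad l)) ∧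
  (∀ i j : Fin N, a i * ad j =
      (∑ k : Fin N, ∑ l : Fin N, R (i, k) (l, j) • (ad k * a l)) +
        if i = j then 1 else 0)

/-- The well-bred conditions `L₁a₂ = R₂₁a₂L₁` and `L₁a₂† = a₂†R₁₂L₁`,
in components, for `L ∈ A_R ⊗ End(ℂᴺ)`. -/
def IsWellBred (N : ℕ) {A : Type*} [Ring A] [Algebra ℂ A]
    (R : Fin N × Fin N → Fin N × Fin N → ℂ) (a ad : Fin N → A)
    (L : Fin N → Fin N → A) : Prop :=
  (∀ i j m : Fin N, L i j * a m =
      ∑ p : Fin N, ∑ q : Fin N, R (m, i) (q, p) • (a q * L p j)) ∧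
  (∀ i j m : Fin N, L i j * ad m =
      ∑ p : Fin N, ∑ q : Fin N, R (i, q) (p, m) • (ad q * L p j))

/-- For a well-bred element `L` of `A_R ⊗ End(ℂᴺ)`, the matrix entries of
`L†L` (with `L†` the entrywise adjoint transpose, `(L†)ᵢⱼ = (Lⱼᵢ)†`) are
central in `A_R`, i.e. commute with all generators `aᵢ, aᵢ†`. -/
theorem LdagL_central (N : ℕ) {A : Type*} [Ring A] [Algebra ℂ A]
    (R : Fin N × Fin N → Fin N × Fin N → ℂ)
    (hYBE : YBEC N R) (hU : UnitarityC N R)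
    (a ad : Fin N → A) (hZF : IsZF N R a ad)
    (dag : A →ₗ[ℂ] A)
    (hdagmul : ∀ x y : A, dag (x * y) = dag y * dag x) (hdag1 : dag 1 = 1)
    (hdaga : ∀ i, dag (a i) = ad i) (hdagad : ∀ i, dag (ad i) = a i)
    (L : Fin N → Fin N → A) (hwb : IsWellBred N R a ad L) :
    ∀ i j m : Fin N,
      ((∑ k : Fin N, dag (L k i) * L k j) * a m =
        a m * ∑ k : Fin N, dag (L k i) * L k j) ∧
      ((∑ k : Fin N, dag (L k i) * L k j) * ad m =
        ad m * ∑ k : Fin N, dag (L k i) * L k j) := by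
  obtain ⟨hw1, hw2⟩ := hwb
  obtain ⟨z1, z2, z3⟩ := hZF
  -- Z c = ∑ ad_k L_{kc} commutes with all ad and satisfies [a_m, Z c] = L_{mc}
  have hZa : ∀ c m, a m * (∑ k, ad k * L k c) = (∑ k, ad k * L k c) * a m + L m c := by
    intro c m
    have e1 : a m * (∑ k, ad k * L k c) =
        (∑ k, ∑ s, ∑ t, R (m, s) (t, k) • (ad s * a t * L k c)) + L m c := by
      rw [Finset.mul_sum]
      simp_rw [← mul_assoc, z3, add_mul, Finset.sum_mul, smul_mul_assoc]
      rw [Finset.sum_add_distrib]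
      simp
    have e2 : (∑ k, ad k * L k c) * a m =
        ∑ s, ∑ k, ∑ t, R (m, s) (t, k) • (ad s * a t * L k c) := by
      rw [Finset.sum_mul]
      simp_rw [mul_assoc, hw1, Finset.mul_sum, mul_smul_comm]
    rw [e1, e2, Finset.sum_comm]
  have hZd : ∀ c m, (∑ k, ad k * L k c) * ad m = ad m * (∑ k, ad k * L k c) := by
    intro c m
    have e1 : (∑ k, ad k * L k c) * ad m =
        ∑ k, ∑ p, ∑ q, R (k, q) (p, m) • (ad k * ad q * L p c) := by
      rw [Finset.sum_mul]
      simp_rw [mul_assoc, hw2, Finset.mul_sum, mul_smul_comm]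
    have e2 : ad m * (∑ k, ad k * L k c) =
        ∑ p, ∑ k, ∑ q, R (k, q) (p, m) • (ad k * ad q * L p c) := by
      rw [Finset.mul_sum]
      simp_rw [← mul_assoc, z2 m, Finset.sum_mul, smul_mul_assoc]
    rw [e1, e2, Finset.sum_comm]
  -- the symmetry of the one-body operators
  have hX : ∀ i j, (∑ k, ∑ l, R (i, k) (l, j) • (ad k * a l)) =
      ∑ k, ∑ l, R (j, k) (l, i) • (ad l * a k) := by
    intro i j
    have h := congrArg dag (z3 j i)
    rw [hdagmul, hdaga, hdagad, z3 i j, map_add] at h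
    have hd : dag (if j = i then (1 : A) else 0) = if i = j then 1 else 0 := by
      by_cases hij : i = j
      · simp [hij, hdag1]
      · simp [hij, Ne.symm hij]
    rw [hd] at h
    have h' := add_right_cancel h
    rw [h']
    simp_rw [map_sum, map_smul, hdagmul, hdaga, hdagad]
  -- general commutator principle
  have key1 : ∀ c k l, ad k * a l * (∑ t, ad t * L t c) =
      (∑ t, ad t * L t c) * (ad k * a l) + ad k * L l c := by
    intro c k l
    rw [mul_assoc, hZa, mul_add, ← mul_assoc, ← hZd, mul_assoc]
  have hXL : ∀ c i j, (∑ k, ∑ l, R (i, k) (l, j) • (ad k * L l c)) =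
      ∑ k, ∑ l, R (j, k) (l, i) • (ad l * L k c) := by
    intro c i j
    have hk := key1 c
    generalize (∑ t, ad t * L t c) = Z at hk
    have h := congrArg (fun x => x * Z - Z * x) (hX i j)
    simp only [Finset.sum_mul, smul_mul_assoc, hk, smul_add, Finset.sum_add_distrib,
      Finset.mul_sum, mul_smul_comm, add_sub_cancel_left] at h
    exact h
  have hXM : ∀ c i j, (∑ k, ∑ l, R (i, k) (l, j) • (dag (L k c) * a l)) =
      ∑ k, ∑ l, R (j, k) (l, i) • (dag (L l c) * a k) := by
    intro c i j
    have h := congrArg dag (hXL c j i)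
    simp_rw [map_sum, map_smul, hdagmul, hdagad] at h
    exact h.symm
  intro i j m
  constructor
  · have e1 : (∑ k, dag (L k i) * L k j) * a m =
        ∑ p, (∑ k, ∑ q, R (m, k) (q, p) • (dag (L k i) * a q)) * L p j := by
      rw [Finset.sum_mul]
      simp_rw [mul_assoc, hw1, Finset.mul_sum, Finset.sum_mul, mul_smul_comm, smul_mul_assoc,
        mul_assoc]
      rw [Finset.sum_comm]
    have e2 : ∀ p, a m * dag (L p i) =
        ∑ k, ∑ q, R (p, k) (q, m) • (dag (L q i) * a k) := by
      intro p
      rw [← hdagad, ← hdagmul, hw2, Finset.sum_comm]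
      simp_rw [map_sum, map_smul, hdagmul, hdagad]
    rw [e1, Finset.mul_sum]
    simp_rw [← mul_assoc, e2, hXM]
  · have e1 : ad m * (∑ k, dag (L k i) * L k j) =
        ∑ k, dag (L k i) * ∑ p, ∑ q, R (m, p) (q, k) • (ad q * L p j) := by
      have e2 : ∀ p, ad m * dag (L p i) =
          ∑ k, ∑ q, R (m, p) (q, k) • (dag (L k i) * ad q) := by
        intro p
        rw [← hdaga, ← hdagmul, hw1]
        simp_rw [map_sum, map_smul, hdagmul, hdaga]
      rw [Finset.mul_sum]
      simp_rw [← mul_assoc, e2, Finset.mul_sum, Finset.sum_mul, mul_smul_comm, smul_mul_assoc,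
        mul_assoc]
      rw [Finset.sum_comm]
    rw [e1, Finset.sum_mul]
    refine Finset.sum_congr rfl fun k _ => ?_
    rw [mul_assoc, hw2, Finset.sum_comm, hXL]
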